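/- arXiv:0810.2495 — 2 statements merged into one kernel-verified Lean document; each statement's English description precedes it below -/
import Mathlib

section
/- Let b, B : ℝ → ℝ be continuous functions satisfying |b(r)| ≤ B(r) for all r ∈ ℝ, and define a(x) := ∫₀ˣ b(r) dr and A(x) := ∫₀ˣ B(r) dr. Fix β > 0 and let w : [0, β] → ℝ be any continuous path. Then s²_β(a, w) ≤ s²_β(A, w), where for a continuous function f : ℝ → ℝ one sets m_β(f, w) := (1/β) ∫₀^β f(w(τ)) dτ and s²_β(f, w) := (1/β) ∫₀^β f(w(τ))² dτ − (m_β(f, w))². (This is the path-wise variance inequality from which the diamagnetic monotonicity of the heat kernel is deduced.) -/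
lemma pv_quad (β : ℝ) (hβ : 0 < β) (f : ℝ → ℝ) (hf : ContinuousOn f (Set.Icc 0 β))
    (p q r : ℝ) :
    (∫ t in (0:ℝ)..β, (p * f t ^ 2 + q * f t + r))
      = p * (∫ t in (0:ℝ)..β, f t ^ 2) + q * (∫ t in (0:ℝ)..β, f t) + β * r := by
  have h1 : IntervalIntegrable f MeasureTheory.volume 0 β :=
    ContinuousOn.intervalIntegrable_of_Icc hβ.le hf
  have h2 : IntervalIntegrable (fun t => f t ^ 2) MeasureTheory.volume 0 β :=
    ContinuousOn.intervalIntegrable_of_Icc hβ.le (hf.pow 2)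
  rw [intervalIntegral.integral_add ((h2.const_mul p).add (h1.const_mul q))
      intervalIntegrable_const,
    intervalIntegral.integral_add (h2.const_mul p) (h1.const_mul q),
    intervalIntegral.integral_const_mul, intervalIntegral.integral_const_mul,
    intervalIntegral.integral_const]
  simp

lemma pv_quad_mono (β : ℝ) (hβ : 0 < β) (f g : ℝ → ℝ) (hf : ContinuousOn f (Set.Icc 0 β))
    (hg : ContinuousOn g (Set.Icc 0 β)) (p q r p' q' r' : ℝ)
    (h : ∀ t ∈ Set.Icc 0 β, p * f t ^ 2 + q * f t + r ≤ p' * g t ^ 2 + q' * g t + r') :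
    p * (∫ t in (0:ℝ)..β, f t ^ 2) + q * (∫ t in (0:ℝ)..β, f t) + β * r
      ≤ p' * (∫ t in (0:ℝ)..β, g t ^ 2) + q' * (∫ t in (0:ℝ)..β, g t) + β * r' := by
  rw [← pv_quad β hβ f hf, ← pv_quad β hβ g hg]
  refine intervalIntegral.integral_mono_on hβ.le ?_ ?_ h
  · exact ContinuousOn.intervalIntegrable_of_Icc hβ.le (by fun_prop)
  · exact ContinuousOn.intervalIntegrable_of_Icc hβ.le (by fun_prop)

lemma pv_main (β : ℝ) (hβ : 0 < β) (f g : ℝ → ℝ) (hf : ContinuousOn f (Set.Icc 0 β))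
    (hg : ContinuousOn g (Set.Icc 0 β)) (h : ∀ s t, (f s - f t) ^ 2 ≤ (g s - g t) ^ 2) :
    (1 / β) * (∫ t in (0:ℝ)..β, f t ^ 2) - ((1 / β) * ∫ t in (0:ℝ)..β, f t) ^ 2
      ≤ (1 / β) * (∫ t in (0:ℝ)..β, g t ^ 2) - ((1 / β) * ∫ t in (0:ℝ)..β, g t) ^ 2 := by
  have h1 := fun s => pv_quad_mono β hβ f g hf hg 1 (-2 * f s) (f s ^ 2) 1 (-2 * g s) (g s ^ 2)
    (fun t _ => by nlinarith [h s t])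
  generalize hF2 : (∫ t in (0:ℝ)..β, f t ^ 2) = F2 at *
  generalize hG2 : (∫ t in (0:ℝ)..β, g t ^ 2) = G2 at *
  generalize hF1 : (∫ t in (0:ℝ)..β, f t) = F1 at *
  generalize hG1 : (∫ t in (0:ℝ)..β, g t) = G1 at *
  have h2 := pv_quad_mono β hβ f g hf hg β (-2 * F1) F2 β (-2 * G1) G2
    (fun s _ => by nlinarith [h1 s])
  rw [hF2, hG2, hF1, hG1] at h2
  have e : ∀ x y : ℝ, (1 / β) * x - ((1 / β) * y) ^ 2 = (β * x - y ^ 2) / β ^ 2 := by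
    intro x y
    field_simp
  rw [e, e]
  gcongr ?_ / _
  nlinarith

/-- Path-wise variance inequality: if `|b| ≤ B` pointwise (with `b, B`
continuous), `a, A` are their antiderivatives starting at `0`, `β > 0` and
`w` is a continuous path on `[0, β]`, then the time-average variance of
`a ∘ w` over `[0, β]` is at most that of `A ∘ w`. -/
theorem pathwise_variance_le
    (b B : ℝ → ℝ) (hb : Continuous b) (hB : Continuous B)
    (hle : ∀ r : ℝ, |b r| ≤ B r)
    (β : ℝ) (hβ : 0 < β)
    (w : ℝ → ℝ) (hw : ContinuousOn w (Set.Icc 0 β)) :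
    (1 / β) * (∫ τ in (0:ℝ)..β, (∫ r in (0:ℝ)..(w τ), b r) ^ 2)
        - ((1 / β) * ∫ τ in (0:ℝ)..β, ∫ r in (0:ℝ)..(w τ), b r) ^ 2
      ≤ (1 / β) * (∫ τ in (0:ℝ)..β, (∫ r in (0:ℝ)..(w τ), B r) ^ 2)
        - ((1 / β) * ∫ τ in (0:ℝ)..β, ∫ r in (0:ℝ)..(w τ), B r) ^ 2 := by
  have hbi : ∀ x y, IntervalIntegrable b MeasureTheory.volume x y :=
    fun x y => hb.intervalIntegrable x y
  have hBi : ∀ x y, IntervalIntegrable B MeasureTheory.volume x y :=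
    fun x y => hB.intervalIntegrable x y
  refine pv_main β hβ (fun τ => ∫ r in (0:ℝ)..(w τ), b r) (fun τ => ∫ r in (0:ℝ)..(w τ), B r)
    ((intervalIntegral.continuous_primitive hbi 0).comp_continuousOn hw)
    ((intervalIntegral.continuous_primitive hBi 0).comp_continuousOn hw) ?_
  intro s t
  rw [intervalIntegral.integral_interval_sub_left (hbi _ _) (hbi _ _),
    intervalIntegral.integral_interval_sub_left (hBi _ _) (hBi _ _)]
  have key : ∀ x y, x ≤ y → |∫ r in x..y, b r| ≤ ∫ r in x..y, B r := by
    intro x y hxy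
    exact (intervalIntegral.abs_integral_le_integral_abs hxy).trans
      (intervalIntegral.integral_mono_on hxy (hbi x y).abs (hBi x y) (fun r _ => hle r))
  apply sq_le_sq.mpr
  rcases le_total (w t) (w s) with h | h
  · exact (key _ _ h).trans (le_abs_self _)
  · rw [intervalIntegral.integral_symm, intervalIntegral.integral_symm (w s) (w t), abs_neg, abs_neg]
    exact (key _ _ h).trans (le_abs_self _)
end

section
/- Let C₀ > 0, let d be a positive integer, and let h > 0. Define F : ℝ → ℝ by F(E) := inf_{β > 0} (2π β h²)^{−d/2} · exp(β² C₀ / 2) · exp(β E). Then ln F(E) / E² → −1/(2 C₀) as E → −∞. (This says that the quasi-classical upper bound on the integrated density of states, with the Gaussian value L_β = exp(β² C₀/2) for a homogeneous Gaussian random potential of single-site variance C₀ and optimized over the inverse temperature β, exhibits the exact Gaussian low-energy decay ln N(E) ∼ −E²/(2 C₀).) -/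
open Real Filter

theorem aux_tend (c : ℝ) (hc : 0 < c) :
    Tendsto (fun E : ℝ => Real.log (c * (-E)) / E ^ 2) atBot (nhds 0) := by
  have h1 : Tendsto (fun x : ℝ => Real.log x / x ^ (2:ℝ)) atTop (nhds 0) :=
    (isLittleO_log_rpow_atTop (by norm_num : (0:ℝ) < 2)).tendsto_div_nhds_zero
  have h2 : Tendsto (fun E : ℝ => c * (-E)) atBot atTop :=
    Tendsto.const_mul_atTop hc tendsto_neg_atBot_atTop
  have h3 := (h1.comp h2).const_mul (c ^ 2)
  rw [mul_zero] at h3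
  refine h3.congr' ?_
  filter_upwards [eventually_lt_atBot 0] with E hE
  simp only [Function.comp, Real.rpow_two]
  have : E ≠ 0 := hE.ne
  field_simp

theorem aux_inv (c : ℝ) :
    Tendsto (fun E : ℝ => c / E ^ 2 / E ^ 2) atBot (nhds 0) := by
  have h0 : Tendsto (fun E : ℝ => E⁻¹) atBot (nhds 0) := tendsto_inv_atBot_zero
  have h1 := (h0.pow 4).const_mul c
  norm_num at h1
  refine h1.congr fun E => ?_
  rw [div_div, ← pow_add, div_eq_mul_inv]

theorem aux_lower (k C a t x : ℝ) (hk : 0 ≤ k) (hC : 0 < C) (ha : 0 < a) (ht : 0 < t)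
    (hx : 0 < x) :
    -k * Real.log (a / C * t) - k ^ 2 * C / 2 / t ^ 2 - t ^ 2 / (2 * C) ≤
      -k * Real.log (a * x) + x ^ 2 * C / 2 - x * t := by
  have e : a * x = (a / C * t) * (x * C / t) := by field_simp
  have l1 : Real.log (a * x) ≤ Real.log (a / C * t) + (x * C / t - 1) := by
    rw [e, Real.log_mul (by positivity) (by positivity)]
    have := Real.log_le_sub_one_of_pos (show 0 < x * C / t by positivity)
    linarith
  have l2 := mul_le_mul_of_nonneg_left l1 hk
  have l3 : 0 ≤ C / 2 * (x - t / C - k / t) ^ 2 := by positivity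
  have l4 : C / 2 * (x - t / C - k / t) ^ 2 = k ^ 2 * C / 2 / t ^ 2 + t ^ 2 / (2 * C)
      + x ^ 2 * C / 2 - x * t - k * (x * C / t - 1) := by
    field_simp
    ring
  linarith

/-- The optimized quasi-classical bound on the integrated density of states
for a homogeneous Gaussian random potential,
`F E = inf_{β > 0} (2πβh²)^{-d/2} exp(β²C₀/2) exp(βE)`, has exact Gaussian
low-energy decay: `log (F E) / E² → -1/(2C₀)` as `E → -∞`. -/
theorem gaussian_tail_of_optimized_bound
    (C₀ : ℝ) (hC₀ : 0 < C₀) (d : ℕ) (hd : 0 < d) (h : ℝ) (hh : 0 < h)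
    (F : ℝ → ℝ)
    (hF : ∀ E : ℝ, F E = ⨅ β : {x : ℝ // 0 < x},
      (2 * π * (β : ℝ) * h ^ 2) ^ (-(d : ℝ) / 2)
        * Real.exp ((β : ℝ) ^ 2 * C₀ / 2) * Real.exp ((β : ℝ) * E)) :
    Tendsto (fun E => Real.log (F E) / E ^ 2) atBot (nhds (-1 / (2 * C₀))) := by
  set k : ℝ := (d : ℝ) / 2 with hk
  have hk0 : 0 ≤ k := by positivity
  set a : ℝ := 2 * π * h ^ 2 with ha
  have ha0 : 0 < a := by positivity
  have key : ∀ E x : ℝ, 0 < x → (2 * π * x * h ^ 2) ^ (-(d : ℝ) / 2)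
        * Real.exp (x ^ 2 * C₀ / 2) * Real.exp (x * E)
        = Real.exp (-k * Real.log (a * x) + x ^ 2 * C₀ / 2 - x * (-E)) := by
    intro E x hx
    have e1 : 2 * π * x * h ^ 2 = a * x := by rw [ha]; ring
    rw [e1, Real.rpow_def_of_pos (by positivity), ← Real.exp_add, ← Real.exp_add]
    congr 1
    rw [hk]; ring
  have hlow : ∀ E : ℝ, E < 0 →
      Real.exp (-k * Real.log (a / C₀ * (-E)) - k ^ 2 * C₀ / 2 / (-E) ^ 2
        - (-E) ^ 2 / (2 * C₀)) ≤ F E := by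
    intro E hE
    rw [hF]
    have : Nonempty {x : ℝ // 0 < x} := ⟨⟨1, one_pos⟩⟩
    refine le_ciInf fun β => ?_
    rw [key E β β.2]
    exact Real.exp_le_exp.2 (aux_lower k C₀ a (-E) β hk0 hC₀ ha0 (by linarith) β.2)
  have hup : ∀ E : ℝ, E < 0 →
      F E ≤ Real.exp (-k * Real.log (a / C₀ * (-E)) - (-E) ^ 2 / (2 * C₀)) := by
    intro E hE
    have hx : 0 < -E / C₀ := div_pos (by linarith) hC₀
    rw [hF]
    refine (ciInf_le ⟨0, ?_⟩ ⟨-E / C₀, hx⟩).trans ?_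
    · rintro _ ⟨β, rfl⟩
      simp only
      rw [key E β β.2]
      exact (Real.exp_pos _).le
    · simp only
      rw [key E _ hx]
      apply Real.exp_le_exp.2
      have e1 : a * (-E / C₀) = a / C₀ * (-E) := by ring
      rw [e1]
      apply le_of_eq
      field_simp
      ring
  have t1 := (aux_tend (a / C₀) (by positivity)).const_mul (-k)
  have tU := t1.sub_const (1 / (2 * C₀))
  have tL := tU.sub (aux_inv (k ^ 2 * C₀ / 2))
  have ev : -k * 0 - 1 / (2 * C₀) = -1 / (2 * C₀) := by ring
  rw [sub_zero, ev] at tL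
  rw [ev] at tU
  refine tendsto_of_tendsto_of_tendsto_of_le_of_le' tL tU ?_ ?_
  · filter_upwards [eventually_lt_atBot 0] with E hE
    have hE0 : E ≠ 0 := hE.ne
    have hE2 : 0 < E ^ 2 := by positivity
    have h1 := Real.log_le_log (Real.exp_pos _) (hlow E hE)
    rw [Real.log_exp, neg_sq] at h1
    rw [le_div_iff₀ hE2]
    refine le_trans (le_of_eq ?_) h1
    field_simp
    ring
  · filter_upwards [eventually_lt_atBot 0] with E hE
    have hE0 : E ≠ 0 := hE.ne
    have hE2 : 0 < E ^ 2 := by positivity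
    have h1 := Real.log_le_log ((Real.exp_pos _).trans_le (hlow E hE)) (hup E hE)
    rw [Real.log_exp, neg_sq] at h1
    rw [div_le_iff₀ hE2]
    refine le_trans h1 (le_of_eq ?_)
    field_simp
end
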